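/- For every named GS4 derivation P with conclusion ⊢Γ, there is a cut-free named GS4 derivation Q with conclusion ⊢Γ such that ⟨⟨P⟩⟩ = ⟨⟨Q⟩⟩ (cut-elimination preserving branch-labeled axiom graphs). -/

import Mathlib

open scoped Classical

noncomputable section

namespace GS4

/-- Named classical propositional formulas over atoms `α`, with names in `ℕ`. -/
inductive NForm (α : Type) : Type
  | atom : ℕ → α → NForm α
  | or   : NForm α → NForm α → NForm α
  | and  : NForm α → NForm α → NForm α

variable {α : Type}

/-- Name-preserving De Morgan negation, w.r.t. an involution `bar` on atoms. -/
def negF (bar : α → α) : NForm α → NForm α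
  | .atom x a => .atom x (bar a)
  | .or A B => .and (negF bar A) (negF bar B)
  | .and A B => .or (negF bar A) (negF bar B)

/-- The set of names occurring in a named formula. -/
def NForm.names : NForm α → Set ℕ
  | .atom x _ => {x}
  | .or A B => A.names ∪ B.names
  | .and A B => A.names ∪ B.names

/-- A named formula is sharing-free if every name occurs at most once in it. -/
def NForm.sharingFree : NForm α → Prop
  | .atom _ _ => True
  | .or A B => A.sharingFree ∧ B.sharingFree ∧ Disjoint A.names B.names
  | .and A B => A.sharingFree ∧ B.sharingFree ∧ Disjoint A.names B.names

def NForm.isAtom : NForm α → Prop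
  | .atom _ _ => True
  | _ => False

/-- Anonymous formulas (shapes): `A ≡ B` iff their shapes coincide. -/
inductive Shape (α : Type) : Type
  | atom : α → Shape α
  | or   : Shape α → Shape α → Shape α
  | and  : Shape α → Shape α → Shape α

def NForm.shape : NForm α → Shape α
  | .atom _ a => .atom a
  | .or A B => .or A.shape B.shape
  | .and A B => .and A.shape B.shape

/-- `HasAtom A x a`: the atomic formula `x:a` occurs in `A`. -/
def HasAtom : NForm α → ℕ → α → Prop
  | .atom y b, x, a => y = x ∧ b = a
  | .or A B, x, a => HasAtom A x a ∨ HasAtom B x a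
  | .and A B, x, a => HasAtom A x a ∨ HasAtom B x a

/-- Names of a finite set of named formulas. -/
def snames (Γ : Finset (NForm α)) : Set ℕ := ⋃ A ∈ Γ, A.names

/-- A finite set of named formulas is sharing-free if all its elements are
sharing-free with pairwise disjoint name sets. -/
def SFSet (Γ : Finset (NForm α)) : Prop :=
  (∀ A ∈ Γ, A.sharingFree) ∧
  ∀ A ∈ Γ, ∀ B ∈ Γ, A ≠ B → Disjoint A.names B.names

/-- `x:a` occurs in some formula of `Γ` (i.e. `Γ[x] = a` for sharing-free `Γ`). -/
def HasAtomS (Γ : Finset (NForm α)) (x : ℕ) (a : α) : Prop :=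
  ∃ A ∈ Γ, HasAtom A x a

/-- Branch sets of named formulas. -/
def BrF : NForm α → Set (Set ℕ)
  | .atom x _ => {{x}}
  | .or A B => {X | ∃ Y ∈ BrF A, ∃ Z ∈ BrF B, X = Y ∪ Z}
  | .and A B => BrF A ∪ BrF B

/-- Branch sets of sequents (finite sharing-free sets of named formulas). -/
def BrS (Γ : Finset (NForm α)) : Set (Set ℕ) :=
  {X | X ⊆ snames Γ ∧ ∀ A ∈ Γ, X ∩ A.names ∈ BrF A}

/-! ## Branch-labeled name graphs -/

/-- A branch-labeled name graph: vertices and a relation between unordered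
pairs of vertices and branch labels. -/
structure BLGraph : Type where
  verts : Set ℕ
  rel : Sym2 ℕ → Set ℕ → Prop

/-- Well-formedness of a bl-graph: related pairs consist of distinct vertices,
labels are sets of vertices, and each edge is included in its labels. -/
def BLGraph.IsBL (G : BLGraph) : Prop :=
  ∀ e X, G.rel e X → ¬ e.IsDiag ∧ X ⊆ G.verts ∧ ∀ v ∈ e, v ∈ X

def BLGraph.Edges (G : BLGraph) : Set (Sym2 ℕ) := {e | ∃ X, G.rel e X}

def BLGraph.Br (G : BLGraph) : Set (Set ℕ) := {X | ∃ e, G.rel e X}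

def BLGraph.union (G H : BLGraph) : BLGraph :=
  ⟨G.verts ∪ H.verts, fun e X => G.rel e X ∨ H.rel e X⟩

/-- Restriction `G↾_S` of a bl-graph. -/
def BLGraph.restrict (G : BLGraph) (S : Set ℕ) : BLGraph :=
  ⟨G.verts ∩ S, fun e X => G.rel e X ∧ X ⊆ S⟩

/-- The interface-relativized edge-branch relation `e ⊰^I_G X`. -/
def BLGraph.relI (G : BLGraph) (I : Set ℕ) (e : Sym2 ℕ) (X : Set ℕ) : Prop :=
  ∃ Y, G.rel e Y ∧ X = Y \ I

/-- `z 0, …, z (n-1)` is an `X`-labeled alternating path between `G` and `H`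
through the interface `I`. -/
def AltPath (G H : BLGraph) (I X : Set ℕ) (n : ℕ) (z : ℕ → ℕ) : Prop :=
  1 < n ∧
  (∀ i < n, ∀ j < n, z i = z j → i = j) ∧
  (∀ i, 0 < i → i + 1 < n → z i ∈ I) ∧
  ((∀ i, i + 1 < n →
      (Even i → G.relI I s(z i, z (i + 1)) X) ∧ (¬ Even i → H.relI I s(z i, z (i + 1)) X)) ∨
   (∀ i, i + 1 < n →
      (Even i → H.relI I s(z i, z (i + 1)) X) ∧ (¬ Even i → G.relI I s(z i, z (i + 1)) X)))

/-- Composition of bl-graphs over an interface `I`. -/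
def BLGraph.comp (G H : BLGraph) (I : Set ℕ) : BLGraph :=
  ⟨(G.verts ∪ H.verts) \ I,
   fun e X => ∃ n z, AltPath G H I X n z ∧ z 0 ∉ I ∧ z (n - 1) ∉ I ∧
     e = s(z 0, z (n - 1))⟩

/-- The weakening operator on bl-graphs: add vertices `V` and extend every
branch label by a member of `Brs`. -/
def blwk (V : Set ℕ) (Brs : Set (Set ℕ)) (G : BLGraph) : BLGraph :=
  ⟨G.verts ∪ V, fun e X => ∃ Y Z, G.rel e Y ∧ Z ∈ Brs ∧ X = Y ∪ Z⟩

/-- The bl-identity graph `id_{A,C}` on a pair of dual formulas. -/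
def blid : NForm α → NForm α → BLGraph
  | .atom x _, .atom y _ => ⟨{x, y}, fun e X => e = s(x, y) ∧ X = {x, y}⟩
  | .or A1 A2, .and C1 C2 =>
      (blwk A2.names (BrF A2) (blid A1 C1)).union (blwk A1.names (BrF A1) (blid A2 C2))
  | .and A1 A2, .or C1 C2 =>
      (blwk C2.names (BrF C2) (blid A1 C1)).union (blwk C1.names (BrF C1) (blid A2 C2))
  | _, _ => ⟨∅, fun _ _ => False⟩

/-! ## Simple name graphs -/

/-- A simple name graph. -/
structure NGraph : Type where
  verts : Set ℕ
  edges : Set (Sym2 ℕ)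

/-- Subgraph relation `H ⊑ G`. -/
def NGraph.Sub (H G : NGraph) : Prop := H.verts ⊆ G.verts ∧ H.edges ⊆ G.edges

def NGraph.union (G H : NGraph) : NGraph := ⟨G.verts ∪ H.verts, G.edges ∪ H.edges⟩

/-- Induced subgraph `G↾_S`. -/
def NGraph.restrict (G : NGraph) (S : Set ℕ) : NGraph :=
  ⟨G.verts ∩ S, {e ∈ G.edges | ∀ v ∈ e, v ∈ S}⟩

/-- Alternating paths between simple name graphs through an interface. -/
def NAltPath (G H : NGraph) (I : Set ℕ) (n : ℕ) (z : ℕ → ℕ) : Prop :=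
  0 < n ∧
  (∀ i < n, ∀ j < n, z i = z j → i = j) ∧
  (∀ i, 0 < i → i + 1 < n → z i ∈ I) ∧
  ((∀ i, i + 1 < n →
      (Even i → s(z i, z (i + 1)) ∈ G.edges) ∧ (¬ Even i → s(z i, z (i + 1)) ∈ H.edges)) ∨
   (∀ i, i + 1 < n →
      (Even i → s(z i, z (i + 1)) ∈ H.edges) ∧ (¬ Even i → s(z i, z (i + 1)) ∈ G.edges)))

/-- Composition of simple name graphs over an interface. -/
def NGraph.comp (G H : NGraph) (I : Set ℕ) : NGraph :=
  ⟨(G.verts ∪ H.verts) \ I,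
   {e | ∃ x y, x ≠ y ∧ x ∈ (G.verts ∪ H.verts) \ I ∧ y ∈ (G.verts ∪ H.verts) \ I ∧
        e = s(x, y) ∧ ∃ n z, NAltPath G H I n z ∧ z 0 = x ∧ z (n - 1) = y}⟩

/-- The identity graph `Id_{A,C}` on a pair of dual formulas. -/
def idg : NForm α → NForm α → NGraph
  | .atom x _, .atom y _ => ⟨{x, y}, {s(x, y)}⟩
  | .or A1 A2, .and C1 C2 => (idg A1 C1).union (idg A2 C2)
  | .and A1 A2, .or C1 C2 => (idg A1 C1).union (idg A2 C2)
  | _, _ => ⟨∅, ∅⟩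

/-- The edgeless (weakening) graph on the names of `Γ`. -/
def wkg (Γ : Finset (NForm α)) : NGraph := ⟨snames Γ, ∅⟩

/-! ## Named GS4 derivations -/

/-- Named GS4 derivation trees. -/
inductive Deriv (α : Type) : Type
  | ax (Γ : Finset (NForm α)) (A C : NForm α)
  | cut (A : NForm α) (P Q : Deriv α)
  | sup (P Q : Deriv α)
  | orI (A B : NForm α) (P : Deriv α)
  | andI (A B : NForm α) (P Q : Deriv α)

/-- Conclusion of a derivation tree. -/
def concl : Deriv α → Finset (NForm α)
  | .ax Γ A C => insert A (insert C Γ)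
  | .cut A P _ => (concl P).erase A
  | .sup P _ => concl P
  | .orI A B P => insert (NForm.or A B) (((concl P).erase A).erase B)
  | .andI A B P _ => insert (NForm.and A B) ((concl P).erase A)

/-- Well-formedness of derivation trees w.r.t. the atom involution `bar`:
each rule is applied correctly to sharing-free named sequents. -/
def WF (bar : α → α) : Deriv α → Prop
  | .ax Γ A C =>
      A.shape = (negF bar C).shape ∧
      A.sharingFree ∧ C.sharingFree ∧ SFSet Γ ∧
      Disjoint A.names C.names ∧
      Disjoint A.names (snames Γ) ∧ Disjoint C.names (snames Γ)
  | .cut A P Q =>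
      WF bar P ∧ WF bar Q ∧
      ∃ Γ : Finset (NForm α), A ∉ Γ ∧ negF bar A ∉ Γ ∧
        concl P = insert A Γ ∧ concl Q = insert (negF bar A) Γ ∧
        A.sharingFree ∧ SFSet Γ ∧ Disjoint A.names (snames Γ)
  | .sup P Q => WF bar P ∧ WF bar Q ∧ concl P = concl Q
  | .orI A B P =>
      WF bar P ∧
      ∃ Γ : Finset (NForm α), A ∉ Γ ∧ B ∉ Γ ∧ A ≠ B ∧
        concl P = insert A (insert B Γ) ∧
        A.sharingFree ∧ B.sharingFree ∧ SFSet Γ ∧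
        Disjoint A.names B.names ∧
        Disjoint A.names (snames Γ) ∧ Disjoint B.names (snames Γ)
  | .andI A B P Q =>
      WF bar P ∧ WF bar Q ∧
      ∃ Γ : Finset (NForm α), A ∉ Γ ∧ B ∉ Γ ∧
        concl P = insert A Γ ∧ concl Q = insert B Γ ∧
        A.sharingFree ∧ B.sharingFree ∧ SFSet Γ ∧
        Disjoint A.names B.names ∧
        Disjoint A.names (snames Γ) ∧ Disjoint B.names (snames Γ)

/-- A derivation is cut-free if it contains no cut rule. -/
def CutFree : Deriv α → Prop
  | .ax _ _ _ => True
  | .cut _ _ _ => False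
  | .sup P Q => CutFree P ∧ CutFree Q
  | .orI _ _ P => CutFree P
  | .andI _ _ P Q => CutFree P ∧ CutFree Q

/-- The branch-labeled axiom graph `⟨⟨P⟩⟩` of a derivation. -/
def blaxg : Deriv α → BLGraph
  | .ax Γ A C => blwk (snames Γ) (BrS Γ) (blid A C)
  | .cut A P Q => BLGraph.comp (blaxg P) (blaxg Q) A.names
  | .sup P Q => (blaxg P).union (blaxg Q)
  | .orI _ _ P => blaxg P
  | .andI _ _ P Q => (blaxg P).union (blaxg Q)

/-- The (simple) axiom graph `⟦P⟧` of a derivation. -/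
def axg : Deriv α → NGraph
  | .ax Γ A C => (wkg Γ).union (idg A C)
  | .cut A P Q => NGraph.comp (axg P) (axg Q) A.names
  | .sup P Q => (axg P).union (axg Q)
  | .orI _ _ P => axg P
  | .andI _ _ P Q => (axg P).union (axg Q)

/-! ## Inversion and isolation -/

/-- Inversion of a disjunction `D ∨ E` in the conclusion. -/
def inv (D E : NForm α) : Deriv α → Deriv α
  | .ax Γ A C =>
      if A = NForm.or D E then
        match C with
        | .and C1 C2 =>
            .andI C1 C2 (.ax (insert E Γ) D C1) (.ax (insert D Γ) E C2)
        | _ => .ax Γ A C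
      else if C = NForm.or D E then
        match A with
        | .and A1 A2 =>
            .andI A1 A2 (.ax (insert E Γ) A1 D) (.ax (insert D Γ) A2 E)
        | _ => .ax Γ A C
      else
        .ax (insert D (insert E (Γ.erase (NForm.or D E)))) A C
  | .cut A P Q => .cut A (inv D E P) (inv D E Q)
  | .sup P Q => .sup (inv D E P) (inv D E Q)
  | .orI A B P => if A = D ∧ B = E then P else .orI A B (inv D E P)
  | .andI A B P Q => .andI A B (inv D E P) (inv D E Q)

/-- Left inversion of a conjunction `D ∧ E` in the conclusion. -/
def invl (D E : NForm α) : Deriv α → Deriv α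
  | .ax Γ A C =>
      if A = NForm.and D E then
        match C with
        | .or C1 C2 => .orI C1 C2 (.ax (insert C2 Γ) D C1)
        | _ => .ax Γ A C
      else if C = NForm.and D E then
        match A with
        | .or A1 A2 => .orI A1 A2 (.ax (insert A2 Γ) A1 D)
        | _ => .ax Γ A C
      else
        .ax (insert D (Γ.erase (NForm.and D E))) A C
  | .cut A P Q => .cut A (invl D E P) (invl D E Q)
  | .sup P Q => .sup (invl D E P) (invl D E Q)
  | .orI A B P => .orI A B (invl D E P)
  | .andI A B P Q => if A = D ∧ B = E then P else .andI A B (invl D E P) (invl D E Q)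

/-- Right inversion of a conjunction `D ∧ E` in the conclusion. -/
def invr (D E : NForm α) : Deriv α → Deriv α
  | .ax Γ A C =>
      if A = NForm.and D E then
        match C with
        | .or C1 C2 => .orI C1 C2 (.ax (insert C1 Γ) E C2)
        | _ => .ax Γ A C
      else if C = NForm.and D E then
        match A with
        | .or A1 A2 => .orI A1 A2 (.ax (insert A1 Γ) A2 E)
        | _ => .ax Γ A C
      else
        .ax (insert E (Γ.erase (NForm.and D E))) A C
  | .cut A P Q => .cut A (invr D E P) (invr D E Q)
  | .sup P Q => .sup (invr D E P) (invr D E Q)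
  | .orI A B P => .orI A B (invr D E P)
  | .andI A B P Q => if A = D ∧ B = E then Q else .andI A B (invr D E P) (invr D E Q)

/-- Isolation of a non-atomic formula in the conclusion. -/
def isl : NForm α → Deriv α → Deriv α
  | .or A B, P => .orI A B (inv A B P)
  | .and A B, P => .andI A B (invl A B P) (invr A B P)
  | .atom _ _, P => P

/-- Totality of a bl-graph w.r.t. a sharing-free named sequent. -/
def Total (bar : α → α) (G : BLGraph) (Γ : Finset (NForm α)) : Prop :=
  G.verts = snames Γ ∧
  G.Br = BrS Γ ∧
  ∀ x y : ℕ, s(x, y) ∈ G.Edges →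
    ∀ a b : α, HasAtomS Γ x a → HasAtomS Γ y b → a = bar b

end GS4

/-!
Call a bl-graph a *linking* of `Γ` if its labels are exactly the branches of `Γ` and each edge
joins two dual atoms of `Γ` lying in its label. The axiom graph of every derivation is a linking of
its conclusion, and every linking of `Γ` is the axiom graph of a cut-free derivation: the logical
rules are invertible on linkings, by restriction to the names of each premise, and on an atomic
sequent one superposes an axiom per edge.

The content is that linkings compose. Given a branch `X` of the conclusion of a cut on `A`, pick
one atom from each dual pair and orient every edge away from its end labeled by a picked atom.
Since labels change to their duals between the two sides inside the interface and agree outside it,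
a directed path between exterior vertices automatically alternates. If there is none, the set of
vertices reachable from the exterior yields, as in König's theorem, complementary subsets of
`names A` covering the edges labeled `X` on the two sides. But a set meeting all branches of `A`
contains a branch of the negation of `A`, so one of the two sides has an uncovered edge.
-/

namespace GS4

open scoped SetFamily

variable {α : Type} {bar : α → α} {A B C D : NForm α} {Γ Δ Θ : Finset (NForm α)}

/-! ### Names and atoms -/

theorem NForm.names_nonempty (A : NForm α) : A.names.Nonempty := by
  induction A with
  | atom x _ => exact Set.singleton_nonempty x
  | or A B ihA _ | and A B ihA _ => exact ihA.mono Set.subset_union_left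

theorem NForm.finite_names (A : NForm α) : A.names.Finite := by
  induction A with
  | atom x _ => exact Set.finite_singleton x
  | or A B ihA ihB | and A B ihA ihB => exact ihA.union ihB

@[simp]
theorem names_negF (bar : α → α) (A : NForm α) : (negF bar A).names = A.names := by
  induction A <;> simp_all only [negF, NForm.names]

theorem NForm.sharingFree.negF (h : A.sharingFree) : (negF bar A).sharingFree := by
  induction A <;> simp_all [GS4.negF, NForm.sharingFree]

theorem negF_negF (hbar : Function.Involutive bar) (A : NForm α) :
    negF bar (negF bar A) = A := by
  induction A <;> simp_all [negF, hbar _]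

theorem NForm.mem_names_iff {x : ℕ} : x ∈ A.names ↔ ∃ a, HasAtom A x a := by
  induction A with
  | atom y b => simp [NForm.names, HasAtom, eq_comm]
  | or A B ihA ihB | and A B ihA ihB => simp [NForm.names, HasAtom, exists_or, ihA, ihB]

theorem HasAtom.mem_names {x : ℕ} {a : α} (h : HasAtom A x a) : x ∈ A.names :=
  NForm.mem_names_iff.mpr ⟨a, h⟩

theorem HasAtom.negF {x : ℕ} {a : α} (h : HasAtom A x a) : HasAtom (negF bar A) x (bar a) := by
  induction A with
  | atom y b => exact ⟨h.1, congrArg bar h.2⟩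
  | or A B ihA ihB | and A B ihA ihB => exact h.imp ihA ihB

theorem HasAtom.unique (hA : A.sharingFree) {x : ℕ} {a b : α} (ha : HasAtom A x a)
    (hb : HasAtom A x b) : a = b := by
  induction A with
  | atom y c => exact ha.2.symm.trans hb.2
  | or A B ihA ihB | and A B ihA ihB =>
    obtain ⟨hA, hB, hAB⟩ := hA
    rcases ha with ha | ha <;> rcases hb with hb | hb
    · exact ihA hA ha hb
    · exact (hAB.notMem_of_mem_left ha.mem_names hb.mem_names).elim
    · exact (hAB.notMem_of_mem_left hb.mem_names ha.mem_names).elim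
    · exact ihB hB ha hb

@[simp]
theorem snames_singleton (A : NForm α) : snames {A} = A.names := by
  simp [snames]

@[simp]
theorem snames_insert (A : NForm α) (Γ : Finset (NForm α)) :
    snames (insert A Γ) = A.names ∪ snames Γ := by
  simp [snames]

@[simp]
theorem snames_union (Γ Δ : Finset (NForm α)) : snames (Γ ∪ Δ) = snames Γ ∪ snames Δ := by
  simp only [snames, Finset.mem_union, Set.iUnion_or, Set.iUnion_union_distrib]

theorem names_subset_snames (hA : A ∈ Γ) : A.names ⊆ snames Γ :=
  Set.subset_biUnion_of_mem (u := fun B : NForm α => B.names) hA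

theorem finite_snames (Γ : Finset (NForm α)) : (snames Γ).Finite :=
  Γ.finite_toSet.biUnion fun A _ => A.finite_names

theorem notMem_of_disjoint_snames (h : Disjoint A.names (snames Γ)) : A ∉ Γ := fun hA =>
  A.names_nonempty.ne_empty (disjoint_self.mp (h.mono_right (names_subset_snames hA)))

@[simp]
theorem hasAtomS_singleton {x : ℕ} {a : α} : HasAtomS {A} x a ↔ HasAtom A x a := by
  simp [HasAtomS]

@[simp]
theorem hasAtomS_insert {x : ℕ} {a : α} :
    HasAtomS (insert A Γ) x a ↔ HasAtom A x a ∨ HasAtomS Γ x a := by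
  simp [HasAtomS]

theorem HasAtomS.mono (h : Γ ⊆ Δ) : HasAtomS Γ ≤ HasAtomS Δ := fun _ _ ⟨A, hA, hxa⟩ =>
  ⟨A, h hA, hxa⟩

theorem mem_snames_iff {x : ℕ} : x ∈ snames Γ ↔ ∃ a, HasAtomS Γ x a := by
  simp only [snames, Set.mem_iUnion, NForm.mem_names_iff, HasAtomS]
  tauto

theorem sfSet_insert (hA : A ∉ Γ) :
    SFSet (insert A Γ) ↔ A.sharingFree ∧ SFSet Γ ∧ Disjoint A.names (snames Γ) := by
  have hpw := Set.pairwiseDisjoint_insert_of_notMem (f := fun B : NForm α => B.names)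
    (s := (Γ : Set (NForm α))) (i := A) (by simpa using hA)
  have hsn : Disjoint A.names (snames Γ) ↔ ∀ B ∈ Γ, Disjoint A.names B.names := by
    simp only [snames, Set.disjoint_iUnion_right]
  rw [← Finset.coe_insert] at hpw
  change (_ ∧ ((insert A Γ : Finset (NForm α)) : Set (NForm α)).PairwiseDisjoint _) ↔
    _ ∧ (_ ∧ (Γ : Set (NForm α)).PairwiseDisjoint _) ∧ _
  rw [hpw, hsn, Finset.forall_mem_insert]
  simp only [Finset.mem_coe]
  tauto

theorem HasAtomS.unique (hΓ : SFSet Γ) {x : ℕ} {a b : α} (ha : HasAtomS Γ x a)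
    (hb : HasAtomS Γ x b) : a = b := by
  obtain ⟨A, hA, ha⟩ := ha
  obtain ⟨B, hB, hb⟩ := hb
  obtain rfl : A = B := by
    by_contra hAB
    exact (hΓ.2 A hA B hB hAB).notMem_of_mem_left ha.mem_names hb.mem_names
  exact ha.unique (hΓ.1 A hA) hb

/-! ### Branches -/

theorem BrF_or (A B : NForm α) : BrF (.or A B) = BrF A ⊻ BrF B := by
  ext X
  simp only [BrF, Set.mem_sups, Set.sup_eq_union, eq_comm]
  rfl

theorem subset_names_of_mem_BrF {X : Set ℕ} (h : X ∈ BrF A) : X ⊆ A.names := by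
  induction A generalizing X with
  | atom x a => exact subset_of_eq h
  | or A B ihA ihB =>
    obtain ⟨Y, hY, Z, hZ, rfl⟩ := h
    exact Set.union_subset_union (ihA hY) (ihB hZ)
  | and A B ihA ihB =>
    exact h.elim (fun h => (ihA h).trans Set.subset_union_left)
      (fun h => (ihB h).trans Set.subset_union_right)

theorem nonempty_of_mem_BrF {X : Set ℕ} (h : X ∈ BrF A) : X.Nonempty := by
  induction A generalizing X with
  | atom x a => exact h ▸ Set.singleton_nonempty x
  | or A B ihA _ =>
    obtain ⟨Y, hY, Z, -, rfl⟩ := h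
    exact (ihA hY).mono Set.subset_union_left
  | and A B ihA ihB => exact h.elim ihA ihB

theorem exists_branch_disjoint_or_exists_branch_negF_subset (bar : α → α) (A : NForm α)
    (v : Set ℕ) : (∃ Y ∈ BrF A, Disjoint Y v) ∨ ∃ Y ∈ BrF (negF bar A), Y ⊆ v := by
  induction A with
  | atom x a =>
    by_cases hx : x ∈ v
    · exact .inr ⟨{x}, rfl, Set.singleton_subset_iff.mpr hx⟩
    · exact .inl ⟨{x}, rfl, Set.disjoint_singleton_left.mpr hx⟩
  | or A B ihA ihB =>
    rcases ihA with ⟨Y, hY, hYv⟩ | ⟨Y, hY, hYv⟩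
    · rcases ihB with ⟨Z, hZ, hZv⟩ | ⟨Z, hZ, hZv⟩
      · exact .inl ⟨Y ∪ Z, ⟨Y, hY, Z, hZ, rfl⟩, hYv.union_left hZv⟩
      · exact .inr ⟨Z, .inr hZ, hZv⟩
    · exact .inr ⟨Y, .inl hY, hYv⟩
  | and A B ihA ihB =>
    rcases ihA with ⟨Y, hY, hYv⟩ | ⟨Y, hY, hYv⟩
    · exact .inl ⟨Y, .inl hY, hYv⟩
    · rcases ihB with ⟨Z, hZ, hZv⟩ | ⟨Z, hZ, hZv⟩
      · exact .inl ⟨Z, .inr hZ, hZv⟩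
      · exact .inr ⟨Y ∪ Z, ⟨Y, hY, Z, hZ, rfl⟩, Set.union_subset hYv hZv⟩

@[simp]
theorem BrS_singleton (A : NForm α) : BrS {A} = BrF A := by
  ext X
  simp only [BrS, snames_singleton, Finset.mem_singleton, forall_eq, Set.mem_ofPred_eq]
  refine ⟨fun ⟨hX, hXA⟩ => Set.inter_eq_left.mpr hX ▸ hXA, fun h => ?_⟩
  have hX := subset_names_of_mem_BrF h
  exact ⟨hX, by rwa [Set.inter_eq_left.mpr hX]⟩

theorem inter_snames_mem_BrS {X : Set ℕ} :
    X ∩ snames Γ ∈ BrS Γ ↔ ∀ A ∈ Γ, X ∩ A.names ∈ BrF A := by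
  refine ⟨fun h A hA => ?_, fun h => ⟨Set.inter_subset_right, fun A hA => ?_⟩⟩
  · rw [← Set.inter_eq_right.mpr (names_subset_snames hA), ← Set.inter_assoc]
    exact h.2 A hA
  · rw [Set.inter_assoc, Set.inter_eq_right.mpr (names_subset_snames hA)]
    exact h A hA

theorem BrS_union (h : Disjoint (snames Γ) (snames Δ)) : BrS (Γ ∪ Δ) = BrS Γ ⊻ BrS Δ := by
  have mem_iff (X : Set ℕ) : X ∈ BrS (Γ ∪ Δ) ↔
      X ⊆ snames Γ ∪ snames Δ ∧ X ∩ snames Γ ∈ BrS Γ ∧ X ∩ snames Δ ∈ BrS Δ := by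
    simp only [inter_snames_mem_BrS, ← snames_union, ← Finset.forall_mem_union]
    rfl
  ext X
  rw [mem_iff]
  constructor
  · rintro ⟨hX, hΓ, hΔ⟩
    refine ⟨_, hΓ, _, hΔ, ?_⟩
    change X ∩ _ ∪ X ∩ _ = X
    rw [← Set.inter_union_distrib_left, Set.inter_eq_left.mpr hX]
  · rintro ⟨Y, hY, Z, hZ, rfl⟩
    have hΓ : (Y ∪ Z) ∩ snames Γ = Y := by
      rw [Set.union_inter_distrib_right, Set.inter_eq_left.mpr hY.1,
        (h.symm.mono_left hZ.1).inter_eq, Set.union_empty]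
    have hΔ : (Y ∪ Z) ∩ snames Δ = Z := by
      rw [Set.union_inter_distrib_right, Set.inter_eq_left.mpr hZ.1,
        (h.mono_left hY.1).inter_eq, Set.empty_union]
    exact ⟨Set.union_subset_union hY.1 hZ.1, hΓ.symm ▸ hY, hΔ.symm ▸ hZ⟩

theorem BrS_insert (h : Disjoint A.names (snames Γ)) : BrS (insert A Γ) = BrF A ⊻ BrS Γ := by
  rw [Finset.insert_eq, BrS_union (by rwa [snames_singleton]), BrS_singleton]

theorem BrS_insert_or (hAB : Disjoint A.names B.names) (hA : Disjoint A.names (snames Γ))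
    (hB : Disjoint B.names (snames Γ)) :
    BrS (insert (.or A B) Γ) = BrS (insert A (insert B Γ)) := by
  rw [BrS_insert (by simp [NForm.names, hA, hB]), BrS_insert (by simp [hAB, hA]), BrS_insert hB,
    BrF_or, Set.sups_assoc]

theorem BrS_insert_and (hA : Disjoint A.names (snames Γ)) (hB : Disjoint B.names (snames Γ)) :
    BrS (insert (.and A B) Γ) = BrS (insert A Γ) ∪ BrS (insert B Γ) := by
  rw [BrS_insert (by simp [NForm.names, hA, hB]), BrS_insert hA, BrS_insert hB,
    ← Set.sups_union_left]
  rfl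

theorem disjoint_BrS_insert_powerset {S : Set ℕ} (h : Disjoint A.names S) :
    Disjoint (BrS (insert A Γ)) (𝒫 S) := by
  rw [Set.disjoint_left]
  intro X hX hXS
  obtain ⟨x, hxX, hxA⟩ := nonempty_of_mem_BrF (hX.2 A (Finset.mem_insert_self A Γ))
  exact h.notMem_of_mem_left hxA (hXS hxX)

/-! ### Linkings -/

attribute [ext] BLGraph

theorem BLGraph.Br_union (G H : BLGraph) : (G.union H).Br = G.Br ∪ H.Br := by
  ext X
  exact exists_or

theorem Br_blwk (V : Set ℕ) (Brs : Set (Set ℕ)) (G : BLGraph) :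
    (blwk V Brs G).Br = G.Br ⊻ Brs := by
  ext X
  constructor
  · rintro ⟨e, Y, Z, hY, hZ, rfl⟩
    exact ⟨Y, ⟨e, hY⟩, Z, hZ, rfl⟩
  · rintro ⟨Y, ⟨e, hY⟩, Z, hZ, rfl⟩
    exact ⟨e, Y, Z, hY, hZ, rfl⟩

/-- The pair `e` is a link of `Γ` within the branch `X`: it joins two dual atoms of `Γ` whose
names lie in `X`. -/
def IsLink (bar : α → α) (Γ : Finset (NForm α)) (X : Set ℕ) (e : Sym2 ℕ) : Prop :=
  ∃ x ∈ X, ∃ y ∈ X, ∃ a, HasAtomS Γ x a ∧ HasAtomS Γ y (bar a) ∧ e = s(x, y)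

theorem IsLink.mono {X Y : Set ℕ} {e : Sym2 ℕ} (h : IsLink bar Γ X e)
    (hΓΔ : HasAtomS Γ ≤ HasAtomS Δ) (hXY : X ⊆ Y) : IsLink bar Δ Y e := by
  obtain ⟨x, hx, y, hy, a, hxa, hya, he⟩ := h
  exact ⟨x, hXY hx, y, hXY hy, a, hΓΔ x a hxa, hΓΔ y (bar a) hya, he⟩

theorem IsLink.mem {X : Set ℕ} {e : Sym2 ℕ} (h : IsLink bar Γ X e) {z : ℕ} (hz : z ∈ e) :
    z ∈ X := by
  obtain ⟨x, hx, y, hy, a, -, -, rfl⟩ := h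
  rcases Sym2.mem_iff.mp hz with rfl | rfl
  exacts [hx, hy]

theorem isLink_mk_iff (hbar : Function.Involutive bar) {X : Set ℕ} {x y : ℕ} :
    IsLink bar Γ X s(x, y) ↔
      x ∈ X ∧ y ∈ X ∧ ∃ a, HasAtomS Γ x a ∧ HasAtomS Γ y (bar a) := by
  constructor
  · rintro ⟨u, hu, v, hv, a, hua, hva, he⟩
    rcases Sym2.eq_iff.mp he with ⟨rfl, rfl⟩ | ⟨rfl, rfl⟩
    · exact ⟨hu, hv, a, hua, hva⟩
    · exact ⟨hv, hu, bar a, hva, by rwa [hbar a]⟩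
  · rintro ⟨hx, hy, a, hxa, hya⟩
    exact ⟨x, hx, y, hy, a, hxa, hya, rfl⟩

/-- `G` is a linking of `Γ`: a total bl-graph on the names of `Γ`, that is, one labeled by exactly
the branches of `Γ` and whose edges are links within their labels. This is the conjunction of
`BLGraph.IsBL` and `Total`, with the atoms at the ends of an edge given existentially. -/
structure IsLinking (bar : α → α) (G : BLGraph) (Γ : Finset (NForm α)) : Prop where
  verts : G.verts = snames Γ
  br : G.Br = BrS Γ
  isLink : ∀ ⦃e X⦄, G.rel e X → IsLink bar Γ X e

theorem isLinking_congr {G : BLGraph} (hv : snames Γ = snames Δ) (hbr : BrS Γ = BrS Δ)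
    (hatom : HasAtomS Γ = HasAtomS Δ) : IsLinking bar G Γ ↔ IsLinking bar G Δ := by
  have key {Γ Δ : Finset (NForm α)} (hv : snames Γ = snames Δ) (hbr : BrS Γ = BrS Δ)
      (hatom : HasAtomS Γ = HasAtomS Δ) (hG : IsLinking bar G Γ) : IsLinking bar G Δ :=
    ⟨hG.verts.trans hv, hG.br.trans hbr, fun _ _ h => (hG.isLink h).mono hatom.le subset_rfl⟩
  exact ⟨key hv hbr hatom, key hv.symm hbr.symm hatom.symm⟩

theorem IsLinking.union_of {G H : BLGraph} (hG : IsLinking bar G Γ) (hH : IsLinking bar H Δ)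
    (hv : snames Θ = snames Γ ∪ snames Δ) (hbr : BrS Θ = BrS Γ ∪ BrS Δ)
    (hΓ : HasAtomS Γ ≤ HasAtomS Θ) (hΔ : HasAtomS Δ ≤ HasAtomS Θ) :
    IsLinking bar (G.union H) Θ where
  verts := by rw [hv, ← hG.verts, ← hH.verts]; rfl
  br := by rw [BLGraph.Br_union, hG.br, hH.br, hbr]
  isLink _ _ h := h.elim (fun h => (hG.isLink h).mono hΓ subset_rfl)
    (fun h => (hH.isLink h).mono hΔ subset_rfl)

theorem IsLinking.union {G H : BLGraph} (hG : IsLinking bar G Γ) (hH : IsLinking bar H Γ) :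
    IsLinking bar (G.union H) Γ :=
  hG.union_of hH (Set.union_self _).symm (Set.union_self _).symm le_rfl le_rfl

theorem isLinking_insert_or {G : BLGraph} (hAB : Disjoint A.names B.names)
    (hA : Disjoint A.names (snames Γ)) (hB : Disjoint B.names (snames Γ)) :
    IsLinking bar G (insert (.or A B) Γ) ↔ IsLinking bar G (insert A (insert B Γ)) := by
  refine isLinking_congr ?_ (BrS_insert_or hAB hA hB) ?_
  · simp only [snames_insert, NForm.names, Set.union_assoc]
  · ext x a
    simp only [hasAtomS_insert, HasAtom, or_assoc]

theorem hasAtomS_insert_le_insert_and_left :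
    HasAtomS (insert A Γ) ≤ HasAtomS (insert (.and A B) Γ) := fun x a h => by
  rw [hasAtomS_insert] at h ⊢
  exact h.imp_left .inl

theorem hasAtomS_insert_le_insert_and_right :
    HasAtomS (insert B Γ) ≤ HasAtomS (insert (.and A B) Γ) := fun x a h => by
  rw [hasAtomS_insert] at h ⊢
  exact h.imp_left .inr

theorem IsLinking.and {G H : BLGraph} (hA : Disjoint A.names (snames Γ))
    (hB : Disjoint B.names (snames Γ)) (hG : IsLinking bar G (insert A Γ))
    (hH : IsLinking bar H (insert B Γ)) : IsLinking bar (G.union H) (insert (.and A B) Γ) := by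
  refine hG.union_of hH ?_ (BrS_insert_and hA hB) hasAtomS_insert_le_insert_and_left
    hasAtomS_insert_le_insert_and_right
  rw [snames_insert, snames_insert, snames_insert, NForm.names, Set.union_union_distrib_right]

theorem IsLinking.blwk {G : BLGraph} (hG : IsLinking bar G Γ)
    (h : Disjoint (snames Γ) (snames Δ)) :
    IsLinking bar (blwk (snames Δ) (BrS Δ) G) (Γ ∪ Δ) where
  verts := by rw [snames_union, ← hG.verts]; rfl
  br := by rw [Br_blwk, hG.br, BrS_union h]
  isLink := by
    rintro e _ ⟨Y, Z, hY, -, rfl⟩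
    exact (hG.isLink hY).mono (HasAtomS.mono Finset.subset_union_left) Set.subset_union_left

theorem IsLinking.blwk_union_blwk {G H : BLGraph} (hG : IsLinking bar G {A, C})
    (hH : IsLinking bar H {B, D}) (hAB : Disjoint A.names B.names)
    (h : Disjoint (A.names ∪ B.names) (C.names ∪ D.names)) :
    IsLinking bar
      ((GS4.blwk B.names (BrF B) G).union (GS4.blwk A.names (BrF A) H)) {.or A B, .and C D} := by
  simp only [Set.disjoint_union_left, Set.disjoint_union_right] at h
  obtain ⟨⟨hAC, hBC⟩, hAD, hBD⟩ := h
  have hG' : IsLinking bar (GS4.blwk B.names (BrF B) G) (insert C {A, B}) := by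
    have := hG.blwk (Δ := {B}) (by simp [hAB, hBC.symm])
    rw [snames_singleton, BrS_singleton] at this
    convert this using 1
    ext
    simp only [Finset.mem_insert, Finset.mem_union, Finset.mem_singleton]
    tauto
  have hH' : IsLinking bar (GS4.blwk A.names (BrF A) H) (insert D {A, B}) := by
    have := hH.blwk (Δ := {A}) (by simp [hAB.symm, hAD.symm])
    rw [snames_singleton, BrS_singleton] at this
    convert this using 1
    ext
    simp only [Finset.mem_insert, Finset.mem_union, Finset.mem_singleton]
    tauto
  have hand := hG'.and (by simp [hAC.symm, hBC.symm]) (by simp [hAD.symm, hBD.symm]) hH'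
  rw [isLinking_insert_or hAB (by simp [NForm.names, hAC, hAD])
    (by simp [NForm.names, hBC, hBD])]
  convert hand using 1
  ext
  simp only [Finset.mem_insert, Finset.mem_singleton]
  tauto

theorem isLinking_blid (hbar : Function.Involutive bar) (h : A.shape = (negF bar C).shape)
    (hA : A.sharingFree) (hC : C.sharingFree) (hAC : Disjoint A.names C.names) :
    IsLinking bar (blid A C) {A, C} := by
  induction A generalizing C with
  | atom x a =>
    cases C <;> simp only [negF, NForm.shape, Shape.atom.injEq, reduceCtorEq] at h
    rename_i y c
    subst h
    refine ⟨?_, ?_, ?_⟩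
    · rw [snames_insert, snames_singleton]
      rfl
    · rw [BrS_insert (by simpa using hAC), BrS_singleton]
      simp only [blid, BLGraph.Br, BrF, Set.singleton_sups_singleton, exists_and_right,
        exists_eq, true_and]
      rfl
    · rintro e X ⟨rfl, rfl⟩
      exact ⟨x, by simp, y, by simp, bar c, by simp [HasAtom], by simp [HasAtom, hbar c], rfl⟩
  | or A B ihA ihB =>
    cases C <;> simp only [negF, NForm.shape, Shape.or.injEq, reduceCtorEq] at h
    obtain ⟨hA, hB, hAB⟩ := hA
    obtain ⟨hC, hD, -⟩ := hC
    exact .blwk_union_blwk (ihA h.1 hA hC (hAC.mono Set.subset_union_left Set.subset_union_left))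
      (ihB h.2 hB hD (hAC.mono Set.subset_union_right Set.subset_union_right)) hAB hAC
  | and A B ihA ihB =>
    cases C <;> simp only [negF, NForm.shape, Shape.and.injEq, reduceCtorEq] at h
    obtain ⟨hA, hB, -⟩ := hA
    obtain ⟨hC, hD, hCD⟩ := hC
    rw [Finset.pair_comm]
    refine .blwk_union_blwk ?_ ?_ hCD hAC.symm
    · rw [Finset.pair_comm]
      exact ihA h.1 hA hC (hAC.mono Set.subset_union_left Set.subset_union_left)
    · rw [Finset.pair_comm]
      exact ihB h.2 hB hD (hAC.mono Set.subset_union_right Set.subset_union_right)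

/-! ### Loop erasure -/

theorem exists_injOn_path_of_reflTransGen {V : Type*} {r : V → V → Prop} {u w : V}
    (h : Relation.ReflTransGen r u w) :
    ∃ (n : ℕ) (z : ℕ → V), z 0 = u ∧ z n = w ∧ (∀ i < n, r (z i) (z (i + 1))) ∧
      Set.InjOn z (Set.Iic n) := by
  induction h using Relation.ReflTransGen.head_induction_on with
  | refl => exact ⟨0, fun _ => w, rfl, rfl, by simp, by simp [Set.InjOn]⟩
  | @head u v huv _ ih =>
    obtain ⟨n, z, rfl, hw, hz, hinj⟩ := ih
    by_cases hu : ∃ k ≤ n, z k = u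
    · obtain ⟨k, hk, rfl⟩ := hu
      refine ⟨n - k, fun i => z (k + i), rfl, by grind, fun i hi => hz (k + i) (by omega), ?_⟩
      intro i hi j hj hij
      simp only [Set.mem_Iic] at hi hj
      have := hinj (Set.mem_Iic.mpr (by omega)) (Set.mem_Iic.mpr (by omega)) hij
      omega
    · push Not at hu
      refine ⟨n + 1, fun | 0 => u | i + 1 => z i, rfl, hw, ?_, ?_⟩
      · rintro (_ | i) hi
        · exact huv
        · exact hz i (by omega)
      · rintro (_ | i) hi (_ | j) hj hij
        · rfl
        · exact (hu j (by simpa using hj) hij.symm).elim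
        · exact (hu i (by simpa using hi) hij).elim
        · exact congrArg (· + 1) (hinj (by simpa using hi) (by simpa using hj) hij)

/-! ### Alternating paths -/

/-- `z 0, …, z n` is a complete alternating path through the interface `I` between the edge sets
`E true` and `E false`, whose first edge lies in `E b`. -/
structure IsCompleteAltPath {V : Type*} (E : Bool → Set (Sym2 V)) (I : Set V) (b : Bool) (n : ℕ)
    (z : ℕ → V) : Prop where
  pos : 0 < n
  injOn : Set.InjOn z (Set.Iic n)
  internal : ∀ i, 0 < i → i < n → z i ∈ I
  start : z 0 ∉ I
  finish : z n ∉ I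
  edge : ∀ i < n, s(z i, z (i + 1)) ∈ E (not^[i] b)

/-- The labels `ℓ b` of the vertices on the two sides `b` are dual across edges and, at vertices
of the interface `I`, across sides; at other vertices the two sides agree. -/
structure IsDualLabeling {V : Type*} (bar : α → α) (E : Bool → Set (Sym2 V)) (I : Set V)
    (ℓ : Bool → V → α) : Prop where
  edge : ∀ ⦃b u v⦄, s(u, v) ∈ E b → ℓ b v = bar (ℓ b u)
  inside : ∀ ⦃b z⦄, z ∈ I → ℓ (!b) z = bar (ℓ b z)
  outside : ∀ ⦃b z⦄, z ∉ I → ℓ (!b) z = ℓ b z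

/-- The edges of an alternating path, oriented from a label in `S` to a label outside `S`. -/
def Arrow {V : Type*} (E : Bool → Set (Sym2 V)) (ℓ : Bool → V → α) (S : Set α) (u v : V) : Prop :=
  ∃ b, s(u, v) ∈ E b ∧ ℓ b u ∈ S

/-- As in König's theorem, the set `T` of vertices reachable by arrows from the exterior yields
complementary vertex covers of the two sides: a vertex covers side `b` if its arrows on that side
leave it outside `T` or enter it inside `T`. -/
def cover {V : Type*} (I : Set V) (ℓ : Bool → V → α) (S : Set α) (T : Set V) (b : Bool) : Set V :=
  {z ∈ I | ℓ b z ∈ S ↔ z ∉ T}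

theorem exists_transversal (hbar : Function.Involutive bar) (hfix : ∀ a, bar a ≠ a) :
    ∃ S : Set α, ∀ a, bar a ∈ S ↔ a ∉ S := by
  refine ⟨{a | WellOrderingRel a (bar a)}, fun a => ?_⟩
  simp only [Set.mem_ofPred_eq, hbar a]
  refine ⟨fun h h' => asymm_of WellOrderingRel h h', fun h => ?_⟩
  exact ((trichotomous_of WellOrderingRel a (bar a)).resolve_left h).resolve_left (hfix a).symm

namespace IsDualLabeling

variable {V : Type*} {E : Bool → Set (Sym2 V)} {I : Set V} {ℓ : Bool → V → α} {S : Set α}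

theorem outside_eq (hℓ : IsDualLabeling bar E I ℓ) {z : V} (hz : z ∉ I) (b c : Bool) :
    ℓ b z = ℓ c z := by
  by_cases h : b = c
  · rw [h]
  · rw [Bool.eq_not_of_ne h, hℓ.outside hz]

theorem label_finish (hℓ : IsDualLabeling bar E I ℓ) (hbar : Function.Involutive bar) {b : Bool}
    {n : ℕ} {z : ℕ → V} (hz : IsCompleteAltPath E I b n z) (c : Bool) :
    ℓ c (z n) = bar (ℓ c (z 0)) := by
  have label_const : ∀ i < n, ℓ (not^[i] b) (z i) = ℓ b (z 0) := by
    intro i hi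
    induction i with
    | zero => rfl
    | succ i ih =>
      rw [Function.iterate_succ_apply', hℓ.inside (hz.internal _ (by omega) hi),
        hℓ.edge (hz.edge i (by omega)), hbar, ih (by omega)]
  obtain ⟨m, rfl⟩ := Nat.exists_eq_add_one.mpr hz.pos
  rw [hℓ.outside_eq hz.finish c (not^[m] b), hℓ.outside_eq hz.start c b,
    hℓ.edge (hz.edge m (by omega)), label_const m (by omega)]

theorem isCompleteAltPath_of_arrow (hℓ : IsDualLabeling bar E I ℓ)
    (hS : ∀ a, bar a ∈ S ↔ a ∉ S) {n : ℕ} {z : ℕ → V} (hn : 0 < n)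
    (hinj : Set.InjOn z (Set.Iic n)) (hstart : z 0 ∉ I) (hfinish : z n ∉ I)
    (harrow : ∀ i < n, Arrow E ℓ S (z i) (z (i + 1))) : ∃ b, IsCompleteAltPath E I b n z := by
  have turn {u v : V} {b c : Bool} (huv : s(u, v) ∈ E b) (hu : ℓ b u ∈ S)
      (hv : ℓ c v ∈ S) : v ∈ I ∧ c = !b := by
    have hbv : ℓ b v ∉ S := by rwa [hℓ.edge huv, hS, not_not]
    exact ⟨by_contra fun hvI => hbv (hℓ.outside_eq hvI c b ▸ hv),
      Bool.eq_not_of_ne fun hcb => hbv (hcb ▸ hv)⟩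
  choose! b hE hlabel using harrow
  have side_eq : ∀ i < n, b i = not^[i] (b 0) := by
    intro i hi
    induction i with
    | zero => rfl
    | succ i ih =>
      rw [Function.iterate_succ_apply', ← ih (by omega)]
      exact (turn (hE i (by omega)) (hlabel i (by omega)) (hlabel (i + 1) hi)).2
  refine ⟨b 0, hn, hinj, fun i hi0 hi => ?_, hstart, hfinish, fun i hi => ?_⟩
  · obtain ⟨j, rfl⟩ := Nat.exists_eq_add_one.mpr hi0
    exact (turn (hE j (by omega)) (hlabel j (by omega)) (hlabel (j + 1) hi)).1
  · rw [← side_eq i hi]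
    exact hE i hi

theorem cover_not (hℓ : IsDualLabeling bar E I ℓ) (hS : ∀ a, bar a ∈ S ↔ a ∉ S) (T : Set V)
    (b : Bool) : cover I ℓ S T (!b) = I \ cover I ℓ S T b := by
  ext z
  simp only [cover, Set.mem_ofPred_eq, Set.mem_sdiff]
  refine and_congr_right fun hz => ?_
  rw [hℓ.inside hz, hS]
  tauto

theorem exists_mem_cover (hℓ : IsDualLabeling bar E I ℓ) (hS : ∀ a, bar a ∈ S ↔ a ∉ S)
    {T : Set V} (closed : ∀ ⦃x y⦄, Arrow E ℓ S x y → x ∈ T → y ∈ T)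
    (source : ∀ ⦃b x⦄, x ∉ I → ℓ b x ∈ S → x ∈ T) (no_sink : ∀ ⦃b x⦄, x ∉ I → x ∈ T → ℓ b x ∈ S)
    {b : Bool} {e : Sym2 V} (he : e ∈ E b) : ∃ z ∈ e, z ∈ cover I ℓ S T b := by
  have of_mem {x y : V} (h : s(x, y) ∈ E b) (hx : ℓ b x ∈ S) :
      ∃ z ∈ s(x, y), z ∈ cover I ℓ S T b := by
    have hy : ℓ b y ∉ S := by rwa [hℓ.edge h, hS, not_not]
    by_cases hxT : x ∈ T
    · have hyT : y ∈ T := closed ⟨b, h, hx⟩ hxT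
      have hyI : y ∈ I := by_contra fun hyI => hy (no_sink hyI hyT)
      exact ⟨y, Sym2.mem_mk_right x y, hyI, iff_of_false hy (not_not.mpr hyT)⟩
    · have hxI : x ∈ I := by_contra fun hxI => hxT (source hxI hx)
      exact ⟨x, Sym2.mem_mk_left x y, hxI, iff_of_true hx hxT⟩
  induction e with | _ x y
  by_cases hx : ℓ b x ∈ S
  · exact of_mem he hx
  · have hy : ℓ b y ∈ S := by rwa [hℓ.edge he, hS]
    rw [Sym2.eq_swap] at he ⊢
    exact of_mem he hy

theorem exists_isCompleteAltPath_or_exists_cover (hℓ : IsDualLabeling bar E I ℓ)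
    (hbar : Function.Involutive bar) (hfix : ∀ a, bar a ≠ a) :
    (∃ b n z, IsCompleteAltPath E I b n z) ∨
      ∃ c : Bool → Set V, (∀ b, c (!b) = I \ c b) ∧ ∀ b, ∀ e ∈ E b, ∃ x ∈ e, x ∈ c b := by
  obtain ⟨S, hS⟩ := exists_transversal hbar hfix
  let T : Set V := {w | ∃ u ∉ I, (∃ b, ℓ b u ∈ S) ∧ Relation.ReflTransGen (Arrow E ℓ S) u w}
  by_cases hT : ∃ w ∈ T, w ∉ I ∧ ∃ b, ℓ b w ∉ S
  · obtain ⟨w, ⟨u, hu, ⟨b, hub⟩, huw⟩, hw, c, hwc⟩ := hT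
    obtain ⟨n, z, rfl, rfl, harrow, hinj⟩ := exists_injOn_path_of_reflTransGen huw
    have hn : n ≠ 0 := by
      rintro rfl
      exact hwc (hℓ.outside_eq hu c b ▸ hub)
    obtain ⟨b, hz⟩ := hℓ.isCompleteAltPath_of_arrow hS (Nat.pos_of_ne_zero hn) hinj hu hw harrow
    exact .inl ⟨b, n, z, hz⟩
  · push Not at hT
    refine .inr ⟨cover I ℓ S T, hℓ.cover_not hS T, fun b e he => hℓ.exists_mem_cover hS ?_ ?_ ?_ he⟩
    · rintro x y hxy ⟨u, hu, hub, hux⟩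
      exact ⟨u, hu, hub, hux.tail hxy⟩
    · exact fun b x hx hxS => ⟨x, hx, ⟨b, hxS⟩, .refl⟩
    · exact fun b x hx hxT => hT x hxT hx b

end IsDualLabeling

/-! ### Composition -/

/-- The atom of `Γ` at the name `x`; an arbitrary atom if `x` is no name of `Γ`. -/
def atomAt [Nonempty α] (Γ : Finset (NForm α)) (x : ℕ) : α :=
  Classical.epsilon (HasAtomS Γ x)

theorem HasAtomS.atomAt_eq [Nonempty α] (hΓ : SFSet Γ) {x : ℕ} {a : α} (h : HasAtomS Γ x a) :
    atomAt Γ x = a :=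
  HasAtomS.unique hΓ (Classical.epsilon_spec ⟨a, h⟩) h

theorem atomAt_insert_of_notMem [Nonempty α] {x : ℕ} (hx : x ∉ A.names) :
    atomAt (insert A Γ) x = atomAt Γ x := by
  have : HasAtomS (insert A Γ) x = HasAtomS Γ x := by
    ext a
    rw [hasAtomS_insert, or_iff_right fun h => hx h.mem_names]
  rw [atomAt, atomAt, this]

/-- The edges labeled `X` on the two sides of the composition of `G` and `H` through `I`. -/
def compEdges (G H : BLGraph) (I X : Set ℕ) (b : Bool) : Set (Sym2 ℕ) :=
  {e | (cond b G H).relI I e X}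

theorem altPath_succ_iff {G H : BLGraph} {I X : Set ℕ} {n : ℕ} {z : ℕ → ℕ} :
    AltPath G H I X (n + 1) z ∧ z 0 ∉ I ∧ z n ∉ I ↔
      ∃ b, IsCompleteAltPath (compEdges G H I X) I b n z := by
  have edge_iff (b : Bool) : (∀ i, i + 1 < n + 1 →
      (Even i → (cond b G H).relI I s(z i, z (i + 1)) X) ∧
      (¬ Even i → (cond b H G).relI I s(z i, z (i + 1)) X)) ↔
      ∀ i < n, s(z i, z (i + 1)) ∈ compEdges G H I X (not^[i] b) := by
    refine forall_congr' fun i => imp_congr Nat.succ_lt_succ_iff ?_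
    by_cases hi : Even i
    · simp [compEdges, hi, Bool.involutive_not.iterate_even hi]
    · simp [compEdges, hi, Bool.involutive_not.iterate_odd (Nat.not_even_iff_odd.mp hi)]
  have injOn_iff : (∀ i < n + 1, ∀ j < n + 1, z i = z j → i = j) ↔ Set.InjOn z (Set.Iic n) := by
    simp only [Set.InjOn, Set.mem_Iic, Nat.lt_succ_iff]
  simp only [AltPath, injOn_iff, Nat.succ_lt_succ_iff]
  constructor
  · rintro ⟨⟨hn, hinj, hI, hE | hE⟩, h0, hfinish⟩
    · exact ⟨true, by omega, hinj, hI, h0, hfinish, (edge_iff true).mp (by simpa using hE)⟩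
    · exact ⟨false, by omega, hinj, hI, h0, hfinish, (edge_iff false).mp (by simpa using hE)⟩
  · rintro ⟨b, hn, hinj, hI, h0, hfinish, hE⟩
    have := (edge_iff b).mpr hE
    refine ⟨⟨by omega, hinj, hI, ?_⟩, h0, hfinish⟩
    cases b
    · exact .inr (by simpa using this)
    · exact .inl (by simpa using this)

theorem comp_rel_iff {G H : BLGraph} {I X : Set ℕ} {e : Sym2 ℕ} :
    (G.comp H I).rel e X ↔
      ∃ b n z, IsCompleteAltPath (compEdges G H I X) I b n z ∧ e = s(z 0, z n) := by
  constructor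
  · rintro ⟨_ | n, z, hz, h0, hfinish, rfl⟩
    · exact absurd hz.1 (by omega)
    · obtain ⟨b, hb⟩ := altPath_succ_iff.mp ⟨hz, h0, hfinish⟩
      exact ⟨b, n, z, hb, rfl⟩
  · rintro ⟨b, n, z, hz, rfl⟩
    obtain ⟨hz, h0, hfinish⟩ := altPath_succ_iff.mpr ⟨b, hz⟩
    exact ⟨n + 1, z, hz, h0, hfinish, rfl⟩

/-- The cut formula on the two sides of a cut on `A`. -/
def cutFormula (bar : α → α) (A : NForm α) (b : Bool) : NForm α :=
  cond b A (negF bar A)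

@[simp]
theorem names_cutFormula (b : Bool) : (cutFormula bar A b).names = A.names := by
  cases b
  · exact names_negF bar A
  · rfl

theorem HasAtom.cutFormula_not (hbar : Function.Involutive bar) {b : Bool} {x : ℕ} {a : α}
    (h : HasAtom (cutFormula bar A b) x a) : HasAtom (cutFormula bar A (!b)) x (bar a) := by
  cases b
  · rw [← negF_negF hbar A]
    exact h.negF
  · exact h.negF

/-- The premises of a cut on `A` with conclusion `Γ`, interpreted by linkings `G` and `H`. -/
structure CutPremises (bar : α → α) (A : NForm α) (Γ : Finset (NForm α)) (G H : BLGraph) :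
    Prop where
  sharingFree : A.sharingFree
  sfSet : SFSet Γ
  disjoint : Disjoint A.names (snames Γ)
  left : IsLinking bar G (insert A Γ)
  right : IsLinking bar H (insert (negF bar A) Γ)

namespace CutPremises

variable {G H : BLGraph}

theorem disjoint_side (h : CutPremises bar A Γ G H) (b : Bool) :
    Disjoint (cutFormula bar A b).names (snames Γ) := by
  rw [names_cutFormula]
  exact h.disjoint

theorem sfSet_side (h : CutPremises bar A Γ G H) (b : Bool) :
    SFSet (insert (cutFormula bar A b) Γ) := by
  rw [sfSet_insert (notMem_of_disjoint_snames (h.disjoint_side b))]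
  refine ⟨?_, h.sfSet, h.disjoint_side b⟩
  cases b
  exacts [h.sharingFree.negF, h.sharingFree]

theorem isLinking_side (h : CutPremises bar A Γ G H) (b : Bool) :
    IsLinking bar (cond b G H) (insert (cutFormula bar A b) Γ) := by
  cases b
  exacts [h.right, h.left]

theorem union_sdiff_names (h : CutPremises bar A Γ G H) {b : Bool} {X Y : Set ℕ}
    (hY : Y ∈ BrF (cutFormula bar A b)) (hX : X ∈ BrS Γ) : (Y ∪ X) \ A.names = X := by
  have hYA : Y ⊆ A.names := names_cutFormula (bar := bar) b ▸ subset_names_of_mem_BrF hY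
  rw [Set.union_sdiff_distrib, Set.sdiff_eq_empty.mpr hYA, Set.empty_union,
    (h.disjoint.symm.mono_left hX.1).sdiff_eq_left]

theorem mem_BrS_of_mem_compEdges (h : CutPremises bar A Γ G H) {X : Set ℕ} {b : Bool}
    {e : Sym2 ℕ} (he : e ∈ compEdges G H A.names X b) : X ∈ BrS Γ := by
  obtain ⟨Y, hY, rfl⟩ := he
  have hYbr : Y ∈ BrS (insert (cutFormula bar A b) Γ) := (h.isLinking_side b).br ▸ ⟨e, hY⟩
  rw [BrS_insert (h.disjoint_side b)] at hYbr
  obtain ⟨U, hU, V, hV, rfl⟩ := hYbr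
  exact (h.union_sdiff_names hU hV).symm ▸ hV

theorem isLink_of_mem_compEdges (h : CutPremises bar A Γ G H) {X : Set ℕ} {b : Bool}
    {e : Sym2 ℕ} (he : e ∈ compEdges G H A.names X b) :
    IsLink bar (insert (cutFormula bar A b) Γ) (X ∪ A.names) e := by
  obtain ⟨Y, hY, rfl⟩ := he
  exact ((h.isLinking_side b).isLink hY).mono le_rfl (Set.subset_sdiff_union Y A.names)

theorem mem_of_mem_compEdges (h : CutPremises bar A Γ G H) {X : Set ℕ} {b : Bool}
    {e : Sym2 ℕ} (he : e ∈ compEdges G H A.names X b) {z : ℕ} (hz : z ∈ e) (hzA : z ∉ A.names) :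
    z ∈ X :=
  ((h.isLink_of_mem_compEdges he).mem hz).resolve_right hzA

theorem exists_mem_compEdges (h : CutPremises bar A Γ G H) {X Y : Set ℕ} {b : Bool}
    (hX : X ∈ BrS Γ) (hY : Y ∈ BrF (cutFormula bar A b)) :
    ∃ e ∈ compEdges G H A.names X b, ∀ z ∈ e, z ∈ Y ∪ X := by
  have hYX : Y ∪ X ∈ (cond b G H).Br := by
    rw [(h.isLinking_side b).br, BrS_insert (h.disjoint_side b)]
    exact ⟨Y, hY, X, hX, rfl⟩
  obtain ⟨e, he⟩ := hYX
  exact ⟨e, ⟨_, he, (h.union_sdiff_names hY hX).symm⟩,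
    fun z => ((h.isLinking_side b).isLink he).mem⟩

theorem isDualLabeling [Nonempty α] (h : CutPremises bar A Γ G H)
    (hbar : Function.Involutive bar) (X : Set ℕ) :
    IsDualLabeling bar (compEdges G H A.names X) A.names
      (fun b => atomAt (insert (cutFormula bar A b) Γ)) where
  edge b u v huv := by
    obtain ⟨-, -, a, hu, hv⟩ := (isLink_mk_iff hbar).mp (h.isLink_of_mem_compEdges huv)
    rw [hu.atomAt_eq (h.sfSet_side b), hv.atomAt_eq (h.sfSet_side b)]
  inside b z hz := by
    rw [← names_cutFormula (bar := bar) b, NForm.mem_names_iff] at hz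
    obtain ⟨a, ha⟩ := hz
    rw [HasAtomS.atomAt_eq (h.sfSet_side b) (hasAtomS_insert.mpr (.inl ha)),
      HasAtomS.atomAt_eq (h.sfSet_side (!b)) (hasAtomS_insert.mpr (.inl (ha.cutFormula_not hbar)))]
  outside b z hz := by
    rw [atomAt_insert_of_notMem (by simpa using hz), atomAt_insert_of_notMem (by simpa using hz)]

theorem exists_isCompleteAltPath [Nonempty α] (h : CutPremises bar A Γ G H)
    (hbar : Function.Involutive bar) (hfix : ∀ a, bar a ≠ a) {X : Set ℕ} (hX : X ∈ BrS Γ) :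
    ∃ b n z, IsCompleteAltPath (compEdges G H A.names X) A.names b n z := by
  refine ((h.isDualLabeling hbar X).exists_isCompleteAltPath_or_exists_cover
    hbar hfix).resolve_right ?_
  rintro ⟨c, hc, hcover⟩
  have hcA (b : Bool) : c b ⊆ A.names := by
    rw [← Bool.not_not b, hc]
    exact Set.sdiff_subset
  have branch_meets_cover (b : Bool) {Y : Set ℕ} (hY : Y ∈ BrF (cutFormula bar A b)) :
      ¬ Disjoint Y (c b) := by
    obtain ⟨e, he, hends⟩ := h.exists_mem_compEdges hX hY
    obtain ⟨x, hxe, hxc⟩ := hcover b e he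
    have hxX : x ∉ X := fun hx => h.disjoint.notMem_of_mem_left (hcA b hxc) (hX.1 hx)
    exact Set.not_disjoint_iff.mpr ⟨x, (hends x hxe).resolve_right hxX, hxc⟩
  rcases exists_branch_disjoint_or_exists_branch_negF_subset bar A (c true) with
    ⟨Y, hY, hYc⟩ | ⟨Y, hY, hYc⟩
  · exact branch_meets_cover true hY hYc
  · refine branch_meets_cover false hY ?_
    rw [show c false = A.names \ c true from hc true]
    exact Set.disjoint_sdiff_right.mono_left hYc

theorem isLink_of_isCompleteAltPath [Nonempty α] (h : CutPremises bar A Γ G H)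
    (hbar : Function.Involutive bar) {X : Set ℕ} {b : Bool} {n : ℕ} {z : ℕ → ℕ}
    (hz : IsCompleteAltPath (compEdges G H A.names X) A.names b n z) :
    IsLink bar Γ X s(z 0, z n) := by
  obtain ⟨m, rfl⟩ := Nat.exists_eq_add_one.mpr hz.pos
  have hX := h.mem_BrS_of_mem_compEdges (hz.edge 0 hz.pos)
  have hstart := h.mem_of_mem_compEdges (hz.edge 0 hz.pos) (Sym2.mem_mk_left _ _) hz.start
  have hfinish := h.mem_of_mem_compEdges (hz.edge m m.lt_succ_self) (Sym2.mem_mk_right _ _)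
    hz.finish
  obtain ⟨a, ha⟩ := mem_snames_iff.mp (hX.1 hstart)
  obtain ⟨c, hc⟩ := mem_snames_iff.mp (hX.1 hfinish)
  have hdual := (h.isDualLabeling hbar X).label_finish hbar hz true
  rw [atomAt_insert_of_notMem (by simpa using hz.finish),
    atomAt_insert_of_notMem (by simpa using hz.start), ha.atomAt_eq h.sfSet,
    hc.atomAt_eq h.sfSet] at hdual
  exact ⟨_, hstart, _, hfinish, a, ha, hdual ▸ hc, rfl⟩

theorem isLinking_comp (h : CutPremises bar A Γ G H) (hbar : Function.Involutive bar)
    (hfix : ∀ a, bar a ≠ a) : IsLinking bar (G.comp H A.names) Γ := by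
  obtain ⟨x, hx⟩ := A.names_nonempty
  have : Nonempty α := (NForm.mem_names_iff.mp hx).nonempty
  refine ⟨?_, ?_, ?_⟩
  · simp only [BLGraph.comp, h.left.verts, h.right.verts, snames_insert, names_negF,
      Set.union_self, Set.union_sdiff_left]
    exact h.disjoint.symm.sdiff_eq_left
  · ext X
    constructor
    · rintro ⟨e, he⟩
      obtain ⟨b, n, z, hz, -⟩ := comp_rel_iff.mp he
      exact h.mem_BrS_of_mem_compEdges (hz.edge 0 hz.pos)
    · intro hX
      obtain ⟨b, n, z, hz⟩ := h.exists_isCompleteAltPath hbar hfix hX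
      exact ⟨_, comp_rel_iff.mpr ⟨b, n, z, hz, rfl⟩⟩
  · intro e X he
    obtain ⟨b, n, z, hz, rfl⟩ := comp_rel_iff.mp he
    exact h.isLink_of_isCompleteAltPath hbar hz

end CutPremises

/-! ### Soundness -/

theorem SFSet.insert (hΓ : SFSet Γ) (hA : A.sharingFree) (h : Disjoint A.names (snames Γ)) :
    SFSet (insert A Γ) :=
  (sfSet_insert (notMem_of_disjoint_snames h)).mpr ⟨hA, hΓ, h⟩

/-- `A`, `B` and `Γ` are sharing-free with pairwise disjoint name sets: the side condition of the
disjunction and conjunction rules introducing `A ∨ B` and `A ∧ B` next to `Γ`. -/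
structure SharingFreeParts (A B : NForm α) (Γ : Finset (NForm α)) : Prop where
  left : A.sharingFree
  right : B.sharingFree
  sfSet : SFSet Γ
  disjoint : Disjoint A.names B.names
  disjoint_left : Disjoint A.names (snames Γ)
  disjoint_right : Disjoint B.names (snames Γ)

theorem sfSet_insert_or_iff (h : .or A B ∉ Γ) :
    SFSet (insert (.or A B) Γ) ↔ SharingFreeParts A B Γ := by
  rw [sfSet_insert h, NForm.names, Set.disjoint_union_left]
  exact ⟨fun ⟨⟨hA, hB, hAB⟩, hΓ, hAΓ, hBΓ⟩ => ⟨hA, hB, hΓ, hAB, hAΓ, hBΓ⟩,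
    fun ⟨hA, hB, hΓ, hAB, hAΓ, hBΓ⟩ => ⟨⟨hA, hB, hAB⟩, hΓ, hAΓ, hBΓ⟩⟩

theorem sfSet_insert_and_iff (h : .and A B ∉ Γ) :
    SFSet (insert (.and A B) Γ) ↔ SharingFreeParts A B Γ := by
  rw [sfSet_insert h, NForm.names, Set.disjoint_union_left]
  exact ⟨fun ⟨⟨hA, hB, hAB⟩, hΓ, hAΓ, hBΓ⟩ => ⟨hA, hB, hΓ, hAB, hAΓ, hBΓ⟩,
    fun ⟨hA, hB, hΓ, hAB, hAΓ, hBΓ⟩ => ⟨⟨hA, hB, hAB⟩, hΓ, hAΓ, hBΓ⟩⟩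

namespace SharingFreeParts

theorem symm (h : SharingFreeParts A B Γ) : SharingFreeParts B A Γ :=
  ⟨h.right, h.left, h.sfSet, h.disjoint.symm, h.disjoint_right, h.disjoint_left⟩

theorem disjoint_insert (h : SharingFreeParts A B Γ) :
    Disjoint A.names (snames (insert B Γ)) := by
  rw [snames_insert]
  exact h.disjoint.union_right h.disjoint_left

theorem notMem_insert (h : SharingFreeParts A B Γ) : A ∉ insert B Γ :=
  notMem_of_disjoint_snames h.disjoint_insert

theorem notMem (h : SharingFreeParts A B Γ) : A ∉ Γ :=
  notMem_of_disjoint_snames h.disjoint_left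

theorem ne (h : SharingFreeParts A B Γ) : A ≠ B := fun hAB =>
  h.notMem_insert (hAB ▸ Finset.mem_insert_self A Γ)

theorem sfSet_insert (h : SharingFreeParts A B Γ) : SFSet (insert A Γ) :=
  h.sfSet.insert h.left h.disjoint_left

theorem sfSet_insert_insert (h : SharingFreeParts A B Γ) : SFSet (insert A (insert B Γ)) :=
  h.symm.sfSet_insert.insert h.left h.disjoint_insert

theorem or_notMem (h : SharingFreeParts A B Γ) : .or A B ∉ Γ :=
  notMem_of_disjoint_snames (h.disjoint_left.union_left h.disjoint_right)

theorem and_notMem (h : SharingFreeParts A B Γ) : .and A B ∉ Γ :=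
  notMem_of_disjoint_snames (h.disjoint_left.union_left h.disjoint_right)

theorem concl_orI (h : SharingFreeParts A B Γ) {P : Deriv α}
    (hP : concl P = insert A (insert B Γ)) : concl (.orI A B P) = insert (.or A B) Γ := by
  rw [concl, hP, Finset.erase_insert h.notMem_insert, Finset.erase_insert h.symm.notMem]

theorem concl_andI (h : SharingFreeParts A B Γ) {P : Deriv α} (Q : Deriv α)
    (hP : concl P = insert A Γ) : concl (.andI A B P Q) = insert (.and A B) Γ := by
  rw [concl, hP, Finset.erase_insert h.notMem]

end SharingFreeParts

theorem WF.isLinking (hbar : Function.Involutive bar) (hfix : ∀ a, bar a ≠ a) {P : Deriv α}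
    (hP : WF bar P) : SFSet (concl P) ∧ IsLinking bar (blaxg P) (concl P) := by
  induction P with
  | ax Γ A C =>
    obtain ⟨hshape, hA, hC, hΓ, hAC, hAΓ, hCΓ⟩ := hP
    have hparts : SharingFreeParts A C Γ := ⟨hA, hC, hΓ, hAC, hAΓ, hCΓ⟩
    have hlinking := (isLinking_blid hbar hshape hA hC hAC).blwk (Δ := Γ) (by simp [hAΓ, hCΓ])
    rw [Finset.insert_union, Finset.singleton_union] at hlinking
    exact ⟨hparts.sfSet_insert_insert, hlinking⟩
  | cut A P Q ihP ihQ =>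
    obtain ⟨hP, hQ, Γ, hAΓ, -, hcP, hcQ, hA, hΓ, hd⟩ := hP
    rw [show concl (.cut A P Q) = Γ by rw [concl, hcP, Finset.erase_insert hAΓ]]
    exact ⟨hΓ, CutPremises.isLinking_comp ⟨hA, hΓ, hd, hcP ▸ (ihP hP).2, hcQ ▸ (ihQ hQ).2⟩
      hbar hfix⟩
  | sup P Q ihP ihQ =>
    obtain ⟨hP, hQ, hc⟩ := hP
    exact ⟨(ihP hP).1, (ihP hP).2.union (hc ▸ (ihQ hQ).2)⟩
  | orI A B P ihP =>
    obtain ⟨hP, Γ, -, -, -, hcP, hA, hB, hΓ, hAB, hAΓ, hBΓ⟩ := hP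
    have hparts : SharingFreeParts A B Γ := ⟨hA, hB, hΓ, hAB, hAΓ, hBΓ⟩
    rw [hparts.concl_orI hcP]
    exact ⟨(sfSet_insert_or_iff hparts.or_notMem).mpr hparts,
      (isLinking_insert_or hAB hAΓ hBΓ).mpr (hcP ▸ (ihP hP).2)⟩
  | andI A B P Q ihP ihQ =>
    obtain ⟨hP, hQ, Γ, -, -, hcP, hcQ, hA, hB, hΓ, hAB, hAΓ, hBΓ⟩ := hP
    have hparts : SharingFreeParts A B Γ := ⟨hA, hB, hΓ, hAB, hAΓ, hBΓ⟩
    rw [hparts.concl_andI Q hcP]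
    exact ⟨(sfSet_insert_and_iff hparts.and_notMem).mpr hparts,
      .and hAΓ hBΓ (hcP ▸ (ihP hP).2) (hcQ ▸ (ihQ hQ).2)⟩

/-! ### Completeness -/

/-- `G` is the branch-labeled axiom graph of a cut-free derivation of `Γ`. -/
def CutFreeRealizable (bar : α → α) (G : BLGraph) (Γ : Finset (NForm α)) : Prop :=
  ∃ Q, WF bar Q ∧ CutFree Q ∧ concl Q = Γ ∧ blaxg Q = G

namespace CutFreeRealizable

variable {G H : BLGraph}

theorem sup (hG : CutFreeRealizable bar G Γ) (hH : CutFreeRealizable bar H Γ) :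
    CutFreeRealizable bar (G.union H) Γ := by
  obtain ⟨P, hP, hPcf, rfl, rfl⟩ := hG
  obtain ⟨Q, hQ, hQcf, hc, rfl⟩ := hH
  exact ⟨.sup P Q, ⟨hP, hQ, hc.symm⟩, ⟨hPcf, hQcf⟩, rfl, rfl⟩

theorem orI (h : SharingFreeParts A B Γ) (hG : CutFreeRealizable bar G (insert A (insert B Γ))) :
    CutFreeRealizable bar G (insert (.or A B) Γ) := by
  obtain ⟨P, hP, hcf, hc, rfl⟩ := hG
  exact ⟨.orI A B P, ⟨hP, Γ, h.notMem, h.symm.notMem, h.ne, hc, h.left, h.right, h.sfSet,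
    h.disjoint, h.disjoint_left, h.disjoint_right⟩, hcf, h.concl_orI hc, rfl⟩

theorem andI (h : SharingFreeParts A B Γ) (hG : CutFreeRealizable bar G (insert A Γ))
    (hH : CutFreeRealizable bar H (insert B Γ)) :
    CutFreeRealizable bar (G.union H) (insert (.and A B) Γ) := by
  obtain ⟨P, hP, hPcf, hcP, rfl⟩ := hG
  obtain ⟨Q, hQ, hQcf, hcQ, rfl⟩ := hH
  exact ⟨.andI A B P Q, ⟨hP, hQ, Γ, h.notMem, h.symm.notMem, hcP, hcQ, h.left, h.right, h.sfSet,
    h.disjoint, h.disjoint_left, h.disjoint_right⟩, ⟨hPcf, hQcf⟩, h.concl_andI Q hcP, rfl⟩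

end CutFreeRealizable

/-- The bl-graph with vertices `V` and edges `E`, each labeled by `V` only. -/
def BLGraph.ofEdges (V : Set ℕ) (E : Set (Sym2 ℕ)) : BLGraph :=
  ⟨V, fun e X => e ∈ E ∧ X = V⟩

theorem BLGraph.ofEdges_union (V : Set ℕ) (E F : Set (Sym2 ℕ)) :
    (ofEdges V E).union (ofEdges V F) = ofEdges V (E ∪ F) := by
  simp only [ofEdges, BLGraph.union, Set.union_self, Set.mem_union, or_and_right]

theorem BLGraph.edges_nonempty_iff {G : BLGraph} : G.Edges.Nonempty ↔ G.Br.Nonempty :=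
  exists_comm

theorem CutFreeRealizable.ofEdges {V : Set ℕ} {E : Set (Sym2 ℕ)} (hfin : E.Finite)
    (hne : E.Nonempty) (hE : ∀ e ∈ E, CutFreeRealizable bar (.ofEdges V {e}) Γ) :
    CutFreeRealizable bar (.ofEdges V E) Γ := by
  lift E to Finset (Sym2 ℕ) using hfin
  rw [Finset.coe_nonempty] at hne
  induction hne using Finset.Nonempty.cons_induction with
  | singleton e => simpa using hE e
  | cons e E he _ ih =>
    rw [Finset.coe_cons, Set.insert_eq, ← BLGraph.ofEdges_union]
    exact (hE e (by simp)).sup (ih fun f hf => hE f (by simp [Finset.mem_coe.mp hf]))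

theorem BrS_eq_of_isAtom (hat : ∀ A ∈ Γ, A.isAtom) : BrS Γ = {snames Γ} := by
  have mem_BrF_iff (A : NForm α) (hA : A.isAtom) (X : Set ℕ) :
      X ∩ A.names ∈ BrF A ↔ A.names ⊆ X := by
    cases A with
    | atom x a => exact Set.inter_eq_right
    | or A B | and A B => exact hA.elim
  ext X
  rw [Set.mem_singleton_iff, Set.Subset.antisymm_iff]
  refine and_congr_right fun _ => ?_
  rw [snames, Set.iUnion₂_subset_iff]
  exact forall₂_congr fun A hA => mem_BrF_iff A (hat A hA) X

theorem atom_mem_of_hasAtomS (hat : ∀ A ∈ Γ, A.isAtom) {x : ℕ} {a : α} (h : HasAtomS Γ x a) :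
    .atom x a ∈ Γ := by
  obtain ⟨A, hA, hxa⟩ := h
  cases A with
  | atom y b =>
    obtain ⟨rfl, rfl⟩ := hxa
    exact hA
  | or A B | and A B => exact (hat _ hA).elim

theorem IsLinking.eq_ofEdges {G : BLGraph} (hat : ∀ A ∈ Γ, A.isAtom) (hG : IsLinking bar G Γ) :
    G = .ofEdges (snames Γ) G.Edges := by
  have label_eq {e : Sym2 ℕ} {X : Set ℕ} (h : G.rel e X) : X = snames Γ := by
    have hX : X ∈ BrS Γ := hG.br ▸ ⟨e, h⟩
    rwa [BrS_eq_of_isAtom hat] at hX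
  ext e X
  · exact Set.ext_iff.mp hG.verts e
  · refine ⟨fun h => ⟨⟨X, h⟩, label_eq h⟩, ?_⟩
    rintro ⟨⟨Y, hY⟩, rfl⟩
    exact label_eq hY ▸ hY

theorem IsLinking.edges_nonempty {G : BLGraph} (hat : ∀ A ∈ Γ, A.isAtom)
    (hG : IsLinking bar G Γ) : G.Edges.Nonempty := by
  rw [BLGraph.edges_nonempty_iff, hG.br, BrS_eq_of_isAtom hat]
  exact Set.singleton_nonempty _

theorem IsLinking.finite_edges {G : BLGraph} (hG : IsLinking bar G Γ) : G.Edges.Finite := by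
  refine (finite_snames Γ).toFinset.sym2.finite_toSet.subset ?_
  rintro e ⟨X, he⟩
  have hX : X ∈ BrS Γ := hG.br ▸ ⟨e, he⟩
  simp only [Finset.mem_coe, Finset.mem_sym2_iff, Set.Finite.mem_toFinset]
  exact fun x hx => hX.1 ((hG.isLink he).mem hx)

theorem IsLink.cutFreeRealizable (hbar : Function.Involutive bar) (hfix : ∀ a, bar a ≠ a)
    (hΓ : SFSet Γ) (hat : ∀ A ∈ Γ, A.isAtom) {X : Set ℕ} {e : Sym2 ℕ} (h : IsLink bar Γ X e) :
    CutFreeRealizable bar (.ofEdges (snames Γ) {e}) Γ := by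
  obtain ⟨x, -, y, -, a, hx, hy, rfl⟩ := h
  have hne : NForm.atom x a ≠ NForm.atom y (bar a) := fun h => hfix a (NForm.atom.inj h).2.symm
  have hyΓ := Finset.mem_erase.mpr ⟨hne.symm, atom_mem_of_hasAtomS hat hy⟩
  obtain ⟨Δ, hxΔ, hyΔ, rfl⟩ : ∃ Δ, NForm.atom x a ∉ insert (.atom y (bar a)) Δ ∧
      NForm.atom y (bar a) ∉ Δ ∧ insert (.atom x a) (insert (.atom y (bar a)) Δ) = Γ :=
    ⟨(Γ.erase (.atom x a)).erase (.atom y (bar a)), by simp [hne], Finset.notMem_erase _ _, by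
      rw [Finset.insert_erase hyΓ, Finset.insert_erase (atom_mem_of_hasAtomS hat hx)]⟩
  obtain ⟨-, hyΔsf, hxd⟩ := (sfSet_insert hxΔ).mp hΓ
  obtain ⟨-, hΔ, hyd⟩ := (sfSet_insert hyΔ).mp hyΔsf
  rw [snames_insert, Set.disjoint_union_right] at hxd
  have hwf : WF bar (.ax Δ (.atom x a) (.atom y (bar a))) :=
    ⟨by simp only [negF, NForm.shape, hbar a], trivial, trivial, hΔ, hxd.1, hxd.2, hyd⟩
  have hlinking := (hwf.isLinking hbar hfix).2
  refine ⟨_, hwf, trivial, rfl, ?_⟩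
  rw [hlinking.eq_ofEdges hat, ← (hlinking.edges_nonempty hat).subset_singleton_iff.mp]
  rintro e ⟨_, _, _, h, -⟩
  exact h.1

theorem IsLinking.cutFreeRealizable_of_isAtom (hbar : Function.Involutive bar)
    (hfix : ∀ a, bar a ≠ a) {G : BLGraph} (hΓ : SFSet Γ) (hat : ∀ A ∈ Γ, A.isAtom)
    (hG : IsLinking bar G Γ) : CutFreeRealizable bar G Γ := by
  rw [hG.eq_ofEdges hat]
  refine .ofEdges hG.finite_edges (hG.edges_nonempty hat) ?_
  rintro e ⟨X, he⟩
  exact (hG.isLink he).cutFreeRealizable hbar hfix hΓ hat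

theorem BLGraph.restrict_union_restrict {G : BLGraph} {S T : Set ℕ} (hverts : G.verts ⊆ S ∪ T)
    (hbr : ∀ X ∈ G.Br, X ⊆ S ∨ X ⊆ T) : (G.restrict S).union (G.restrict T) = G := by
  ext e X
  · simp only [BLGraph.union, BLGraph.restrict, ← Set.inter_union_distrib_left,
      Set.inter_eq_left.mpr hverts]
  · simp only [BLGraph.union, BLGraph.restrict, ← and_or_left]
    exact and_iff_left_of_imp fun h => hbr X ⟨e, h⟩

theorem IsLinking.restrict {G : BLGraph} (hΓ : SFSet Γ) (hG : IsLinking bar G Γ)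
    (hatom : HasAtomS Δ ≤ HasAtomS Γ) (hbr : BrS Γ ∩ 𝒫 (snames Δ) = BrS Δ) :
    IsLinking bar (G.restrict (snames Δ)) Δ where
  verts := by
    change G.verts ∩ snames Δ = snames Δ
    rw [hG.verts, Set.inter_eq_right]
    intro x hx
    obtain ⟨a, ha⟩ := mem_snames_iff.mp hx
    exact mem_snames_iff.mpr ⟨a, hatom x a ha⟩
  br := by
    rw [← hbr, ← hG.br]
    ext X
    exact exists_and_right
  isLink e X h := by
    have hasAtomS_of_mem {x : ℕ} {a : α} (hx : x ∈ X) (ha : HasAtomS Γ x a) :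
        HasAtomS Δ x a := by
      obtain ⟨b, hb⟩ := mem_snames_iff.mp (h.2 hx)
      rwa [ha.unique hΓ (hatom x b hb)]
    obtain ⟨x, hx, y, hy, a, hxa, hya, rfl⟩ := hG.isLink h.1
    exact ⟨x, hx, y, hy, a, hasAtomS_of_mem hx hxa, hasAtomS_of_mem hy hya, rfl⟩

namespace SharingFreeParts

theorem BrS_insert_union_inter_powerset (h : SharingFreeParts A B Γ) :
    (BrS (insert A Γ) ∪ BrS (insert B Γ)) ∩ 𝒫 (snames (insert A Γ)) = BrS (insert A Γ) := by
  have hdisj : Disjoint B.names (snames (insert A Γ)) := h.symm.disjoint_insert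
  rw [Set.union_inter_distrib_right, (disjoint_BrS_insert_powerset hdisj).inter_eq,
    Set.union_empty, Set.inter_eq_left]
  exact fun X hX => hX.1

theorem isLinking_restrict_left {G : BLGraph} (h : SharingFreeParts A B Γ)
    (hG : IsLinking bar G (insert (.and A B) Γ)) :
    IsLinking bar (G.restrict (snames (insert A Γ))) (insert A Γ) := by
  refine hG.restrict ((sfSet_insert_and_iff h.and_notMem).mpr h)
    hasAtomS_insert_le_insert_and_left ?_
  rw [BrS_insert_and h.disjoint_left h.disjoint_right, h.BrS_insert_union_inter_powerset]

theorem isLinking_restrict_right {G : BLGraph} (h : SharingFreeParts A B Γ)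
    (hG : IsLinking bar G (insert (.and A B) Γ)) :
    IsLinking bar (G.restrict (snames (insert B Γ))) (insert B Γ) := by
  refine hG.restrict ((sfSet_insert_and_iff h.and_notMem).mpr h)
    hasAtomS_insert_le_insert_and_right ?_
  rw [BrS_insert_and h.disjoint_left h.disjoint_right, Set.union_comm,
    h.symm.BrS_insert_union_inter_powerset]

theorem restrict_union_restrict {G : BLGraph} (h : SharingFreeParts A B Γ)
    (hG : IsLinking bar G (insert (.and A B) Γ)) :
    (G.restrict (snames (insert A Γ))).union (G.restrict (snames (insert B Γ))) = G := by
  refine BLGraph.restrict_union_restrict ?_ ?_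
  · rw [hG.verts, snames_insert, snames_insert, snames_insert, NForm.names,
      Set.union_union_distrib_right]
  · rw [hG.br, BrS_insert_and h.disjoint_left h.disjoint_right]
    exact fun X hX => hX.imp And.left And.left

end SharingFreeParts

/-- The number of connectives of a formula, the measure for the induction in
`IsLinking.cutFreeRealizable`. -/
def NForm.connectives : NForm α → ℕ
  | .atom _ _ => 0
  | .or A B | .and A B => A.connectives + B.connectives + 1

theorem IsLinking.cutFreeRealizable (hbar : Function.Involutive bar) (hfix : ∀ a, bar a ≠ a)
    {G : BLGraph} (hΓ : SFSet Γ) (hG : IsLinking bar G Γ) : CutFreeRealizable bar G Γ := by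
  induction hn : ∑ A ∈ Γ, A.connectives using Nat.strong_induction_on generalizing G Γ with
  | _ n ih =>
  by_cases hat : ∀ A ∈ Γ, A.isAtom
  · exact hG.cutFreeRealizable_of_isAtom hbar hfix hΓ hat
  push Not at hat
  obtain ⟨A, hA, hAat⟩ := hat
  obtain ⟨Δ, hAΔ, rfl⟩ : ∃ Δ, A ∉ Δ ∧ insert A Δ = Γ :=
    ⟨Γ.erase A, Finset.notMem_erase A Γ, Finset.insert_erase hA⟩
  rw [Finset.sum_insert hAΔ] at hn
  cases A with
  | atom x a => exact (hAat trivial).elim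
  | or B C =>
    have h := (sfSet_insert_or_iff hAΔ).mp hΓ
    refine .orI h (ih _ ?_ h.sfSet_insert_insert
      ((isLinking_insert_or h.disjoint h.disjoint_left h.disjoint_right).mp hG) rfl)
    rw [Finset.sum_insert h.notMem_insert, Finset.sum_insert h.symm.notMem, ← hn,
      NForm.connectives]
    omega
  | and B C =>
    have h := (sfSet_insert_and_iff hAΔ).mp hΓ
    rw [← h.restrict_union_restrict hG]
    refine .andI h (ih _ ?_ h.sfSet_insert (h.isLinking_restrict_left hG) rfl)
      (ih _ ?_ h.symm.sfSet_insert (h.isLinking_restrict_right hG) rfl)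
    · rw [Finset.sum_insert h.notMem, ← hn, NForm.connectives]
      omega
    · rw [Finset.sum_insert h.symm.notMem, ← hn, NForm.connectives]
      omega

end GS4

/-- cut-elimination preserving branch-labeled axiom graphs. -/
theorem GS4.cut_elimination {α : Type} (bar : α → α)
    (hbar : Function.Involutive bar) (hfix : ∀ a, bar a ≠ a)
    (P : GS4.Deriv α) (hP : GS4.WF bar P) :
    ∃ Q : GS4.Deriv α, GS4.WF bar Q ∧ GS4.CutFree Q ∧
      GS4.concl Q = GS4.concl P ∧ GS4.blaxg Q = GS4.blaxg P := by
  obtain ⟨hΓ, hG⟩ := hP.isLinking hbar hfix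
  exact hG.cutFreeRealizable hbar hfix hΓ
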